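/- arXiv:2510.20045 — 2 statements merged into one kernel-verified Lean document; each statement's English description precedes it below -/
import Mathlib

section
/- Let 𝟙 : ℂ × ℤ → ℂ be the ground state 𝟙(σ,b) = Γ(1/2 + b/2 - iσ) if b = 0 and 0 otherwise. Then for every σ ∈ ℂ with σ ≠ 0 and every b ∈ ℤ: (X𝟙)(σ,b) = (-X̃𝟙)(σ,b) and (P𝟙)(σ,b) = (-P̃𝟙)(σ,b). (This is the paper's lemma relating the holomorphic and antiholomorphic representations on the ground state, the key input to the trace property ⟨1|α_C(r^{±e}) = -⟨1|ᾱ_C(r^{∓e}).) -/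
/-!
On functions supported on `b = 0`, the `b`-dependent prefactors of `X̃` and `P` both reduce to `iσ`.
For the ground state the two identities then become one and the same functional equation
`Γ(1 - iσ) = -iσ Γ(-iσ)`, valid off the pole at `σ = 0`.
-/

open Complex

/-- The monomial-shift operator `X`: `(Xψ)(σ,b) = ψ(σ + i/2, b-1)`. -/
noncomputable def Xop (ψ : ℂ × ℤ → ℂ) : ℂ × ℤ → ℂ :=
  fun p => ψ (p.1 + Complex.I / 2, p.2 - 1)

/-- The monomial-shift operator `P`: `(Pψ)(σ,b) = (1/2 + iσ + b/2) ψ(σ - i/2, b+1)`. -/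
noncomputable def Pop (ψ : ℂ × ℤ → ℂ) : ℂ × ℤ → ℂ :=
  fun p => (1 / 2 + Complex.I * p.1 + (p.2 : ℂ) / 2) * ψ (p.1 - Complex.I / 2, p.2 + 1)

/-- The monomial-shift operator `X̃`: `(X̃ψ)(σ,b) = (1/2 + iσ - b/2) ψ(σ - i/2, b-1)`. -/
noncomputable def Xtop (ψ : ℂ × ℤ → ℂ) : ℂ × ℤ → ℂ :=
  fun p => (1 / 2 + Complex.I * p.1 - (p.2 : ℂ) / 2) * ψ (p.1 - Complex.I / 2, p.2 - 1)

/-- The monomial-shift operator `P̃`: `(P̃ψ)(σ,b) = ψ(σ + i/2, b+1)`. -/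
noncomputable def Ptop (ψ : ℂ × ℤ → ℂ) : ℂ × ℤ → ℂ :=
  fun p => ψ (p.1 + Complex.I / 2, p.2 + 1)

/-- The ground state `|1⟩(σ,b) = δ_{b,0} Γ(1/2 + b/2 - iσ)`. -/
noncomputable def groundState : ℂ × ℤ → ℂ :=
  fun p => if p.2 = 0 then Complex.Gamma (1 / 2 + (p.2 : ℂ) / 2 - Complex.I * p.1) else 0

section SupportedAtZero

variable {ψ : ℂ × ℤ → ℂ} (hψ : ∀ (σ : ℂ) (b : ℤ), b ≠ 0 → ψ (σ, b) = 0)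
include hψ

lemma intCast_mul_eq_zero_of_support (σ : ℂ) (b : ℤ) : (b : ℂ) * ψ (σ, b) = 0 := by
  rcases eq_or_ne b 0 with rfl | hb
  · rw [Int.cast_zero, zero_mul]
  · rw [hψ σ b hb, mul_zero]

lemma Xtop_apply_of_support (σ : ℂ) (b : ℤ) :
    Xtop ψ (σ, b) = I * σ * ψ (σ - I / 2, b - 1) := by
  have hb := intCast_mul_eq_zero_of_support hψ (σ - I / 2) (b - 1)
  push_cast at hb
  rw [Xtop]
  linear_combination (-1 / 2 : ℂ) * hb

lemma Pop_apply_of_support (σ : ℂ) (b : ℤ) :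
    Pop ψ (σ, b) = I * σ * ψ (σ - I / 2, b + 1) := by
  have hb := intCast_mul_eq_zero_of_support hψ (σ - I / 2) (b + 1)
  push_cast at hb
  rw [Pop]
  linear_combination (1 / 2 : ℂ) * hb

end SupportedAtZero

lemma groundState_of_ne_zero (σ : ℂ) (b : ℤ) (hb : b ≠ 0) : groundState (σ, b) = 0 :=
  if_neg hb

lemma groundState_zero (σ : ℂ) : groundState (σ, 0) = Gamma (1 / 2 - I * σ) := by
  simp [groundState]

lemma groundState_add_I_div_two {σ : ℂ} (hσ : σ ≠ 0) (b : ℤ) :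
    groundState (σ + I / 2, b) = -(I * σ * groundState (σ - I / 2, b)) := by
  rcases eq_or_ne b 0 with rfl | hb
  · have hadd : 1 / 2 - I * (σ + I / 2) = -(I * σ) + 1 := by
      linear_combination (-1 / 2 : ℂ) * I_mul_I
    have hsub : 1 / 2 - I * (σ - I / 2) = -(I * σ) := by
      linear_combination (1 / 2 : ℂ) * I_mul_I
    have hne : -(I * σ) ≠ 0 := neg_ne_zero.mpr (mul_ne_zero I_ne_zero hσ)
    rw [groundState_zero, groundState_zero, hadd, hsub, Gamma_add_one _ hne, neg_mul]
  · rw [groundState_of_ne_zero _ b hb, groundState_of_ne_zero _ b hb, mul_zero, neg_zero]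

/-- On the ground state, the holomorphic and antiholomorphic representations agree:
`X|1⟩ = -X̃|1⟩` and `P|1⟩ = -P̃|1⟩`. -/
theorem stmt7 (σ : ℂ) (hσ : σ ≠ 0) (b : ℤ) :
    Xop groundState (σ, b) = -(Xtop groundState (σ, b)) ∧
    Pop groundState (σ, b) = -(Ptop groundState (σ, b)) := by
  constructor
  · rw [Xtop_apply_of_support groundState_of_ne_zero]
    exact groundState_add_I_div_two hσ (b - 1)
  · rw [Pop_apply_of_support groundState_of_ne_zero]
    exact (neg_eq_iff_eq_neg.mpr (groundState_add_I_div_two hσ (b + 1))).symm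
end

section
/- Let w_1, …, w_n be linear functionals on ℝ^m such that for every nonzero β ∈ ℝ^m there exists j with w_j(β) ≠ 0, let c_1, …, c_n be real constants, let R be a polynomial function on ℝ^m with complex coefficients, and let ζ be a linear functional on ℝ^m. Then the function σ ↦ e^{2πi ζ(σ)} R(σ) ∏_{j=1}^{n} (π / cosh(π(w_j(σ) + c_j))) is integrable on ℝ^m with respect to Lebesgue measure. (This is the convergence of the twisted trace integral for abelian gauge theories T = (ℂ*)^m acting on N = ℂ^n with mass parameters c_j.) -/
open Complex Real MeasureTheory

/-!
A linear functional `w` contributes a factor `O(exp (-π |w σ|))`, whatever its shift, so the product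
is `O(exp (-π ∑ j, |w j σ|))`. Functionals without a common nonzero zero embed the space linearly
in `ℝⁿ`; such an embedding is antilipschitz in finite dimension, so the product decays exponentially
in `‖σ‖`. This absorbs the polynomial growth of `R` and leaves any prescribed negative power of
`1 + ‖σ‖`, while the phase has modulus one.
-/

open Asymptotics

lemma inv_cosh_le (x : ℝ) : (Real.cosh x)⁻¹ ≤ 2 * Real.exp (-|x|) := by
  rw [Real.exp_neg, ← div_eq_mul_inv, inv_le_comm₀ (Real.cosh_pos x) (by positivity), inv_div,
    Real.cosh_eq]
  gcongr
  exact Real.exp_abs_le x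

lemma isBigO_inv_cosh_add (b : ℝ) :
    (fun x : ℝ => (Real.cosh (x + b))⁻¹) =O[⊤] fun x => Real.exp (-|x|) := by
  refine isBigO_top.2 ⟨2 * Real.exp |b|, fun x => ?_⟩
  have htri : |x| ≤ |x + b| + |b| := by simpa using abs_sub (x + b) b
  rw [norm_inv, Real.norm_of_nonneg (Real.cosh_pos _).le, Real.norm_of_nonneg (Real.exp_pos _).le]
  calc (Real.cosh (x + b))⁻¹ ≤ 2 * Real.exp (-|x + b|) := inv_cosh_le _
    _ ≤ 2 * Real.exp (|b| + -|x|) := by gcongr; linarith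
    _ = 2 * Real.exp |b| * Real.exp (-|x|) := by rw [Real.exp_add, mul_assoc]

lemma one_add_pow_mul_exp_neg_le {κ t : ℝ} (hκ : 0 < κ) (ht : 0 ≤ 1 + t) (N : ℕ) :
    (1 + t) ^ N * Real.exp (-(κ * t)) ≤ Real.exp κ * N.factorial / κ ^ N := by
  have hpow : (κ * (1 + t)) ^ N ≤ Real.exp (κ * (1 + t)) * N.factorial :=
    (div_le_iff₀ (by positivity)).1 (Real.pow_div_factorial_le_exp _ (by positivity) N)
  rw [le_div_iff₀ (by positivity)]
  calc (1 + t) ^ N * Real.exp (-(κ * t)) * κ ^ N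
      = (κ * (1 + t)) ^ N * Real.exp (-(κ * t)) := by rw [mul_pow]; ring
    _ ≤ Real.exp (κ * (1 + t)) * N.factorial * Real.exp (-(κ * t)) := by gcongr
    _ = Real.exp (κ * (1 + t) + -(κ * t)) * N.factorial := by rw [Real.exp_add]; ring
    _ = Real.exp κ * N.factorial := by ring_nf

lemma integrable_one_add_norm_pow_mul_exp_neg {E : Type*} [NormedAddCommGroup E]
    [MeasurableSpace E] [OpensMeasurableSpace E] {μ : Measure E} [μ.HasTemperateGrowth]
    {κ : ℝ} (hκ : 0 < κ) (d : ℕ) :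
    Integrable (fun x : E => (1 + ‖x‖) ^ d * Real.exp (-(κ * ‖x‖))) μ := by
  set N := μ.integrablePower
  refine IsBigO.integrable (by fun_prop) ?_ μ.integrable_pow_neg_integrablePower
  refine isBigO_top.2 ⟨Real.exp κ * (d + N).factorial / κ ^ (d + N), fun x => ?_⟩
  have hx : 0 < 1 + ‖x‖ := by positivity
  rw [Real.norm_of_nonneg (by positivity), Real.norm_of_nonneg (by positivity),
    Real.rpow_neg hx.le, Real.rpow_natCast, ← div_eq_mul_inv, le_div_iff₀ (by positivity)]
  calc (1 + ‖x‖) ^ d * Real.exp (-(κ * ‖x‖)) * (1 + ‖x‖) ^ N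
      = (1 + ‖x‖) ^ (d + N) * Real.exp (-(κ * ‖x‖)) := by ring
    _ ≤ _ := one_add_pow_mul_exp_neg_le hκ hx.le _

lemma isBigO_eval_pow_totalDegree {α ι 𝕜 : Type*} [NormedField 𝕜] {l : Filter α}
    {x : ι → α → 𝕜} {g : α → ℝ} (hg : 1 ≤ g) (hx : ∀ i, x i =O[l] g) (p : MvPolynomial ι 𝕜) :
    (fun a => MvPolynomial.eval (fun i => x i a) p) =O[l] fun a => g a ^ p.totalDegree := by
  simp only [MvPolynomial.eval_eq]
  refine IsBigO.fun_sum fun s hs => IsBigO.const_mul_left ?_ _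
  calc (fun a => ∏ i ∈ s.support, x i a ^ s i)
      =O[l] fun a => ∏ i ∈ s.support, g a ^ s i := IsBigO.finsetProd fun i _ => (hx i).pow (s i)
    _ = fun a => g a ^ s.sum fun _ n => n :=
        funext fun a => Finset.prod_pow_eq_pow_sum _ _ _
    _ =O[l] fun a => g a ^ p.totalDegree :=
        IsBigO.pow_of_le_right (.of_forall hg) (MvPolynomial.le_totalDegree hs)

lemma isBigO_eval_ofReal_pow_totalDegree {ι : Type*} [Fintype ι] (p : MvPolynomial ι ℂ) :
    (fun σ : EuclideanSpace ℝ ι => MvPolynomial.eval (fun i => ((σ i : ℝ) : ℂ)) p) =O[⊤]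
      fun σ => (1 + ‖σ‖) ^ p.totalDegree := by
  refine isBigO_eval_pow_totalDegree (fun σ => by simp) (fun i => isBigO_of_le _ fun σ => ?_) p
  rw [Complex.norm_real, Real.norm_of_nonneg (r := 1 + ‖σ‖) (by positivity)]
  linarith [PiLp.norm_apply_le σ i]

section SeparatingFunctionals

variable {E ι : Type*} [NormedAddCommGroup E] [Fintype ι]

lemma exists_pos_mul_norm_le_sum_norm {𝕜 : Type*} [NontriviallyNormedField 𝕜] [CompleteSpace 𝕜]
    [NormedSpace 𝕜 E] [FiniteDimensional 𝕜 E] {w : ι → E →ₗ[𝕜] 𝕜}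
    (hw : ∀ x, x ≠ 0 → ∃ j, w j x ≠ 0) :
    ∃ κ : ℝ, 0 < κ ∧ ∀ x, κ * ‖x‖ ≤ ∑ j, ‖w j x‖ := by
  have hker : LinearMap.ker (LinearMap.pi w) = ⊥ := by
    refine LinearMap.ker_eq_bot'.2 fun x hx => ?_
    by_contra hne
    obtain ⟨j, hj⟩ := hw x hne
    exact hj (congrFun hx j)
  obtain ⟨K, hK, hanti⟩ := LinearMap.exists_antilipschitzWith _ hker
  refine ⟨(K : ℝ)⁻¹, by positivity, fun x => (inv_mul_le_iff₀ (by positivity)).2 ?_⟩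
  have hsup : ‖LinearMap.pi w x‖ ≤ ∑ j, ‖w j x‖ :=
    (pi_norm_le_iff_of_nonneg (by positivity)).2 fun j =>
      Finset.single_le_sum (f := fun j => ‖w j x‖) (fun _ _ => norm_nonneg _) (Finset.mem_univ j)
  calc ‖x‖ ≤ K * ‖LinearMap.pi w x‖ := by simpa using hanti.le_mul_dist x 0
    _ ≤ K * ∑ j, ‖w j x‖ := by gcongr

variable [NormedSpace ℝ E] [FiniteDimensional ℝ E]

lemma exists_isBigO_prod_inv_cosh {w : ι → E →ₗ[ℝ] ℝ} (hw : ∀ x, x ≠ 0 → ∃ j, w j x ≠ 0)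
    (c : ι → ℝ) :
    ∃ κ : ℝ, 0 < κ ∧ (fun x => ∏ j, (Real.cosh (w j x + c j))⁻¹) =O[⊤]
      fun x => Real.exp (-(κ * ‖x‖)) := by
  obtain ⟨κ, hκ, hsum⟩ := exists_pos_mul_norm_le_sum_norm hw
  refine ⟨κ, hκ, ?_⟩
  calc (fun x => ∏ j, (Real.cosh (w j x + c j))⁻¹)
      =O[⊤] fun x => ∏ j, Real.exp (-|w j x|) :=
        IsBigO.finsetProd fun j _ => (isBigO_inv_cosh_add (c j)).comp_tendsto Filter.tendsto_top
    _ = fun x => Real.exp (-∑ j, |w j x|) := by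
        simp only [← Real.exp_sum, Finset.sum_neg_distrib]
    _ =O[⊤] fun x => Real.exp (-(κ * ‖x‖)) := isBigO_of_le _ fun x => by
        simpa [Real.norm_of_nonneg (Real.exp_pos _).le] using hsum x

lemma exists_isBigO_prod_pi_div_cosh {w : ι → E →ₗ[ℝ] ℝ} (hw : ∀ x, x ≠ 0 → ∃ j, w j x ≠ 0)
    (c : ι → ℝ) :
    ∃ κ : ℝ, 0 < κ ∧
      (fun x => ∏ j, ((π : ℂ) / ((Real.cosh (π * (w j x + c j)) : ℝ) : ℂ))) =O[⊤]
        fun x => Real.exp (-(κ * ‖x‖)) := by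
  have hπw : ∀ x, x ≠ 0 → ∃ j, (π • w j) x ≠ 0 := fun x hx =>
    (hw x hx).imp fun j hj => mul_ne_zero Real.pi_ne_zero hj
  obtain ⟨κ, hκ, hO⟩ := exists_isBigO_prod_inv_cosh hπw fun j => π * c j
  refine ⟨κ, hκ, (isBigO_of_le _ fun x => le_of_eq ?_).trans (hO.const_mul_left (∏ _j : ι, π))⟩
  simp [div_eq_mul_inv, Finset.prod_mul_distrib, mul_add, -Complex.ofReal_cosh]

theorem stmt13_general [MeasurableSpace E] [OpensMeasurableSpace E]
    {μ : Measure E} [μ.HasTemperateGrowth]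
    {w : ι → E →ₗ[ℝ] ℝ} (hw : ∀ x, x ≠ 0 → ∃ j, w j x ≠ 0) (c : ι → ℝ)
    {f : E → ℂ} (hf : AEStronglyMeasurable f μ) {d : ℕ} (hfO : f =O[⊤] fun x => (1 + ‖x‖) ^ d)
    (ζ : E →ₗ[ℝ] ℝ) :
    Integrable (fun x => Complex.exp (2 * π * Complex.I * ζ x) * f x *
      ∏ j, ((π : ℂ) / ((Real.cosh (π * (w j x + c j)) : ℝ) : ℂ))) μ := by
  obtain ⟨κ, hκ, hprod⟩ := exists_isBigO_prod_pi_div_cosh hw c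
  have hphase : ∀ x, ‖Complex.exp (2 * π * Complex.I * ζ x)‖ = 1 := fun x => by
    simp [Complex.norm_exp]
  have hphase_mul : (fun x => Complex.exp (2 * π * Complex.I * ζ x) * f x) =O[⊤] f :=
    isBigO_of_le _ fun x => by rw [norm_mul, hphase, one_mul]
  have hζ : Continuous ζ := ζ.continuous_of_finiteDimensional
  have hwc : ∀ j, Continuous (w j) := fun j => (w j).continuous_of_finiteDimensional
  have hprod_cont :
      Continuous fun x => ∏ j, ((π : ℂ) / ((Real.cosh (π * (w j x + c j)) : ℝ) : ℂ)) := by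
    refine continuous_finsetProd _ fun j _ => continuous_const.div ?_ fun x => ?_
    · have := hwc j
      fun_prop
    · exact Complex.ofReal_ne_zero.2 (Real.cosh_pos _).ne'
  have hmeas : AEStronglyMeasurable (fun x => Complex.exp (2 * π * Complex.I * ζ x)) μ :=
    Continuous.aestronglyMeasurable (by fun_prop)
  exact ((hphase_mul.trans hfO).mul hprod).integrable
    ((hmeas.mul hf).mul hprod_cont.aestronglyMeasurable)
    (integrable_one_add_norm_pow_mul_exp_neg hκ d)

end SeparatingFunctionals

/-- Convergence of the twisted trace integral for abelian gauge theories
`T = (ℂ*)^m` acting on `N = ℂ^n`: if the weights `w_j` span the dual space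
(the conical condition for an abelian theory), then
`σ ↦ e^{2πiζ(σ)} R(σ) ∏_j π/cosh(π(w_j(σ) + c_j))` is integrable on `ℝ^m`. -/
theorem stmt13 (m n : ℕ)
    (w : Fin n → (EuclideanSpace ℝ (Fin m) →ₗ[ℝ] ℝ))
    (c : Fin n → ℝ)
    (hw : ∀ β : EuclideanSpace ℝ (Fin m), β ≠ 0 → ∃ j : Fin n, w j β ≠ 0)
    (R : MvPolynomial (Fin m) ℂ)
    (ζ : EuclideanSpace ℝ (Fin m) →ₗ[ℝ] ℝ) :
    MeasureTheory.Integrable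
      (fun σ : EuclideanSpace ℝ (Fin m) =>
        Complex.exp (2 * Real.pi * Complex.I * (ζ σ)) *
          MvPolynomial.eval (fun i => ((σ i : ℝ) : ℂ)) R *
            ∏ j : Fin n, ((Real.pi : ℂ) / ((Real.cosh (Real.pi * (w j σ + c j)) : ℝ) : ℂ)))
      (MeasureTheory.volume : MeasureTheory.Measure (EuclideanSpace ℝ (Fin m))) := by
  exact stmt13_general hw c ((MvPolynomial.continuous_eval R).comp
    (by fun_prop)).aestronglyMeasurable (isBigO_eval_ofReal_pow_totalDegree R) ζ
end
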